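/- arXiv:math/0610529 — 3 statements merged into one kernel-verified Lean document; each statement's English description precedes it below -/
import Mathlib

section
/- Let A be a unital C*-algebra and let u ∈ M_3(A) be a magic unitary: each entry is a projection and each row and column sums to 1. Then all nine entries of u pairwise commute. -/
/-!
Projections `p, q, r` with `p + q + r = 1` are mutually orthogonal, so distinct entries of `u` in
a common row or column multiply to `0`. For `i ≠ k` and `j ≠ l`, let `m` be the third column.
Expanding `u k l` along its row gives
`u i j * u k l * u i m = u i j * (1 - u k j - u k m) * u i m = 0`,
and `u k l * u i l = 0`. Multiplying `u i j * u k l` on the right by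
`1 = u i j + u i l + u i m` therefore yields `u i j * u k l = u i j * u k l * u i j`. The right-hand
side is self-adjoint, hence so is `u i j * u k l`, which means that the two projections commute.
-/

open BigOperators

/-- A magic unitary over a unital C*-algebra `A`: a square matrix whose entries
are projections (`p² = p = p*`) and whose rows and columns each sum to `1`. -/
def IsMagicUnitary {A : Type*} [NormedRing A] [StarRing A] {n : ℕ}
    (u : Matrix (Fin n) (Fin n) A) : Prop :=
  (∀ i j, u i j * u i j = u i j ∧ star (u i j) = u i j) ∧
  (∀ i, ∑ j, u i j = 1) ∧ (∀ j, ∑ i, u i j = 1)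

/-- Three idempotents summing to `1` are orthogonal: since `1 - r` is idempotent, `p` and `q`
anticommute, which for idempotents forces `p * q = 0` in the absence of `2`-torsion. -/
lemma mul_eq_zero_of_idem_sum {A : Type*} [Ring A] [Algebra ℂ A] {p q r : A}
    (hp : p * p = p) (hq : q * q = q) (hr : r * r = r) (h : p + q + r = 1) : p * q = 0 := by
  have hr' : r = 1 - p - q := by rw [← h]; abel
  have hanti : p * q + q * p = 0 := by
    have h2 : (1 - p - q) * (1 - p - q) = (1 - p - q) + (p * q + q * p) := by
      have h3 : (1 - p - q) * (1 - p - q)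
          = 1 - p - q - p + p * p + p * q - q + q * p + q * q := by noncomm_ring
      rw [h3, hp, hq]; abel
    rw [hr', h2] at hr
    simpa using hr
  have h1 : p * q + p * q * p = 0 := by
    have := congrArg (p * ·) hanti
    simpa [mul_add, ← mul_assoc, hp] using this
  have h2 : p * q * p + q * p = 0 := by
    have := congrArg (· * p) hanti
    simpa [add_mul, mul_assoc, hp] using this
  have hcomm : q * p = p * q :=
    (eq_neg_of_add_eq_zero_right h2).trans (eq_neg_of_add_eq_zero_left h1).symm
  rw [hcomm, ← two_smul ℂ (p * q)] at hanti
  exact (smul_eq_zero_iff_right (two_ne_zero' ℂ)).1 hanti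

/-- A sum over `Fin 3`, with two distinct indices singled out. -/
lemma exists_third {j l : Fin 3} (h : j ≠ l) : ∃ m, m ≠ j ∧ m ≠ l ∧
    ∀ {A : Type _} [AddCommMonoid A] (f : Fin 3 → A), ∑ x, f x = f j + f l + f m := by
  obtain ⟨m, hj, hl⟩ : ∃ m, m ≠ j ∧ m ≠ l := by decide +revert
  refine ⟨m, hj, hl, fun f => ?_⟩
  have hu : (Finset.univ : Finset (Fin 3)) = {j, l, m} := by decide +revert
  rw [hu, Finset.sum_insert (by simp [h, hj.symm]), Finset.sum_insert (by simp [hl.symm]),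
    Finset.sum_singleton, add_assoc]

/-- all nine entries of a 3×3 magic unitary over a unital
C*-algebra pairwise commute. -/
theorem stmt_12 {A : Type*} [NormedRing A] [StarRing A] [CStarRing A]
    [NormedAlgebra ℂ A] [StarModule ℂ A] [CompleteSpace A]
    (u : Matrix (Fin 3) (Fin 3) A) (hu : IsMagicUnitary u) :
    ∀ i j k l, Commute (u i j) (u k l) := by
  obtain ⟨hproj, hrow, hcol⟩ := hu
  have orow : ∀ i {j l}, j ≠ l → u i j * u i l = 0 := fun i j l h => by
    obtain ⟨m, -, -, hs⟩ := exists_third h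
    exact mul_eq_zero_of_idem_sum (hproj i j).1 (hproj i l).1 (hproj i m).1
      ((hs fun x => u i x).symm.trans (hrow i))
  have ocol : ∀ j {i k}, i ≠ k → u i j * u k j = 0 := fun j i k h => by
    obtain ⟨m, -, -, hs⟩ := exists_third h
    exact mul_eq_zero_of_idem_sum (hproj i j).1 (hproj k j).1 (hproj m j).1
      ((hs fun x => u x j).symm.trans (hcol j))
  intro i j k l
  rcases eq_or_ne i k with rfl | hik
  · rcases eq_or_ne j l with rfl | hjl
    · exact Commute.refl _
    · exact (orow i hjl).trans (orow i hjl.symm).symm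
  rcases eq_or_ne j l with rfl | hjl
  · exact (ocol j hik).trans (ocol j hik.symm).symm
  obtain ⟨m, hmj, -, hs⟩ := exists_third hjl
  have hi : u i j + u i l + u i m = 1 := (hs fun x => u i x).symm.trans (hrow i)
  have hk : u k j + u k l + u k m = 1 := (hs fun x => u k x).symm.trans (hrow k)
  have hzero : u i j * u k l * u i m = 0 := by
    have hkl : u k l = 1 - u k j - u k m := by rw [← hk]; abel
    rw [hkl, mul_sub, mul_sub, ocol j hik, sub_mul, mul_assoc _ (u k m), ocol m hik.symm]
    simp [orow i hmj.symm]
  have key : u i j * u k l = u i j * u k l * u i j := by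
    calc u i j * u k l = u i j * u k l * (u i j + u i l + u i m) := by rw [hi, mul_one]
      _ = u i j * u k l * u i j := by
        rw [mul_add, mul_add, hzero, mul_assoc _ _ (u i l), ocol l hik.symm]
        simp
  have hstar := congrArg star key
  simp only [star_mul, (hproj _ _).2] at hstar
  rw [← mul_assoc, ← key] at hstar
  exact hstar.symm
end

section
/- Let P = (P_{ij}) be an n×n matrix whose entries are rank-one orthogonal projections in M_n(ℂ), such that each row and column sums to the identity matrix (a magic unitary of rank-one projections), and suppose that the P_{ij} pairwise commute. Then there exist a partition of unity E = (E_1,…,E_n) consisting of rank-one orthogonal projections in M_n(ℂ) with ∑_k E_k = I and E_kE_l = 0 for k ≠ l, and a magic square σ of size n, such that P_{ij} = E_{σ(i,j)} for all i, j; in particular, each row of P is a permutation of its first row. -/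
/-!
Two commuting rank-one idempotents `A`, `B` are either equal or satisfy `A * B = 0`: writing `A` as
an outer product gives `A * B = A * B * A = c • A` for a scalar `c`, and idempotency of `A * B`
forces `c = 0` or `c = 1`; the same holds with the roles exchanged (`mul_eq_zero_or_eq`).

If rank-one idempotents `Q j` sum to `1` and commute with a rank-one idempotent `R`, then
`R = ∑ j, R * Q j` is `R` times the number of `j` with `Q j = R`, so that number is `1`
(`existsUnique_index_eq`). Hence each row and each column of `P` contains every entry of the whole matrix
exactly once. The first row therefore serves as the partition of unity `E`, and `σ i j` is the
position at which `P i j` occurs in it.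
-/

open BigOperators Matrix

/-- A magic square of size `n`: an `n×n` matrix with entries in `{1,…,n}` such
that each row and each column is a permutation of `(1,…,n)`. -/
def IsMagicSquare {n : ℕ} (σ : Fin n → Fin n → Fin n) : Prop :=
  (∀ i, Function.Bijective (σ i)) ∧ (∀ j, Function.Bijective fun i => σ i j)

/-- A rank-one matrix compresses every matrix to a scalar multiple of itself. -/
lemma exists_mul_mul_eq_smul {n : ℕ} {A : Matrix (Fin n) (Fin n) ℂ} (hA : A.rank = 1)
    (B : Matrix (Fin n) (Fin n) ℂ) : ∃ c : ℂ, A * B * A = c • A := by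
  obtain ⟨⟨u, hu_mem⟩, -, hu⟩ := finrank_eq_one_iff'.1 hA
  choose c hc using fun j => hu ⟨A *ᵥ Pi.single j 1, ⟨Pi.single j 1, rfl⟩⟩
  have hA' : A = vecMulVec u c := by
    ext i j
    have h := congrFun (congrArg Subtype.val (hc j)) i
    simp only [SetLike.val_smul, Pi.smul_apply, smul_eq_mul, mulVec_single_one, col_apply] at h
    rw [vecMulVec_apply, ← h, mul_comm]
  clear hc hu hu_mem
  refine ⟨c ᵥ* B ⬝ᵥ u, ?_⟩
  rw [hA', vecMulVec_mul, vecMulVec_mul_vecMulVec, vecMulVec_smul]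

lemma mul_eq_zero_or_left {n : ℕ} {A B : Matrix (Fin n) (Fin n) ℂ} (hA : A * A = A)
    (hB : B * B = B) (hrA : A.rank = 1) (h : Commute A B) : A * B = 0 ∨ A * B = A := by
  obtain ⟨c, hc⟩ := exists_mul_mul_eq_smul hrA B
  have hAB : A * B = c • A := by rw [← hc, mul_assoc, ← h.eq, ← mul_assoc, hA]
  have hcc : c • A = (c * c) • A := by
    calc c • A = A * B * B := by rw [mul_assoc, hB, hAB]
      _ = (c * c) • A := by rw [hAB, smul_mul_assoc, hAB, smul_smul]
  have hA0 : A ≠ 0 := by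
    rintro rfl
    simp at hrA
  have h2 : c = c * c := smul_left_injective ℂ hA0 hcc
  rcases eq_or_ne c 0 with h0 | h0
  · left
    rw [hAB, h0, zero_smul]
  · right
    rw [hAB, mul_left_cancel₀ h0 (h2.symm.trans (mul_one c).symm), one_smul]

lemma mul_eq_zero_or_eq {n : ℕ} {A B : Matrix (Fin n) (Fin n) ℂ} (hA : A * A = A)
    (hB : B * B = B) (hrA : A.rank = 1) (hrB : B.rank = 1) (h : Commute A B) :
    A * B = 0 ∨ A = B := by
  rcases mul_eq_zero_or_left hA hB hrA h with h1 | h1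
  · exact Or.inl h1
  rcases mul_eq_zero_or_left hB hA hrB h.symm with h2 | h2
  · exact Or.inl (h.eq.trans h2)
  · exact Or.inr (h1.symm.trans (h.eq.trans h2))

/-- A rank-one idempotent commuting with a rank-one resolution of the identity is one of its members,
and occurs there only once. -/
lemma existsUnique_index_eq {n : ℕ} {Q : Fin n → Matrix (Fin n) (Fin n) ℂ}
    {R : Matrix (Fin n) (Fin n) ℂ} (hQ : ∀ j, Q j * Q j = Q j) (hrQ : ∀ j, (Q j).rank = 1)
    (hsum : ∑ j, Q j = 1) (hR : R * R = R) (hrR : R.rank = 1) (hc : ∀ j, Commute R (Q j)) :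
    ∃! j, Q j = R := by
  classical
  have hR0 : R ≠ 0 := by
    rintro rfl
    simp at hrR
  have hterm : ∀ j, R * Q j = if Q j = R then R else 0 := by
    intro j
    split_ifs with hj
    · rw [hj, hR]
    · exact (mul_eq_zero_or_eq hR (hQ j) hrR (hrQ j) (hc j)).resolve_right fun e => hj e.symm
  -- Expanding `R = R * ∑ j, Q j` counts the indices `j` with `Q j = R`.
  have hcount : ((Finset.univ.filter fun j => Q j = R).card : ℂ) • R = (1 : ℂ) • R := by
    calc _ = ∑ j, R * Q j := by
          simp only [hterm, ← Finset.sum_filter, Finset.sum_const, Nat.cast_smul_eq_nsmul]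
      _ = (1 : ℂ) • R := by rw [← Finset.mul_sum, hsum, mul_one, one_smul]
  have hcard : (Finset.univ.filter fun j => Q j = R).card = 1 := by
    exact_mod_cast smul_left_injective ℂ hR0 hcount
  obtain ⟨j, hj⟩ := Finset.card_eq_one.1 hcard
  simp only [Finset.ext_iff, Finset.mem_filter, Finset.mem_univ, true_and,
    Finset.mem_singleton] at hj
  exact ⟨j, (hj j).2 rfl, fun k hk => (hj k).1 hk⟩

/-- a magic unitary `P` over `Mₙ(ℂ)` consisting of pairwise
commuting rank-one orthogonal projections is of the form `P_{ij} = E_{σ(i,j)}`,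
for a partition of unity `E = (E₁,…,Eₙ)` by rank-one orthogonal projections and
a magic square `σ` of size `n`; in particular each row of `P` is a permutation
of its first row. -/
theorem stmt_14 (n : ℕ) (P : Fin n → Fin n → Matrix (Fin n) (Fin n) ℂ)
    (hidem : ∀ i j, P i j * P i j = P i j)
    (hsa : ∀ i j, (P i j)ᴴ = P i j)
    (hrank : ∀ i j, (P i j).rank = 1)
    (hrows : ∀ i, ∑ j, P i j = 1)
    (hcols : ∀ j, ∑ i, P i j = 1)
    (hcomm : ∀ i j k l, Commute (P i j) (P k l)) :
    ∃ (E : Fin n → Matrix (Fin n) (Fin n) ℂ) (σ : Fin n → Fin n → Fin n),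
      (∀ k, E k * E k = E k) ∧ (∀ k, (E k)ᴴ = E k) ∧ (∀ k, (E k).rank = 1) ∧
      (∀ k l, k ≠ l → E k * E l = 0) ∧ (∑ k, E k = 1) ∧
      IsMagicSquare σ ∧ (∀ i j, P i j = E (σ i j)) := by
  rcases n with _ | n
  · exact ⟨fun k => k.elim0, fun i => i.elim0, fun k => k.elim0, fun k => k.elim0,
      fun k => k.elim0, fun k => k.elim0, Subsingleton.elim _ _,
      ⟨fun i => i.elim0, fun i => i.elim0⟩, fun i => i.elim0⟩
  have hrow : ∀ i k l, ∃! j, P i j = P k l := fun i k l =>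
    existsUnique_index_eq (hidem i) (hrank i) (hrows i) (hidem k l) (hrank k l) (hcomm k l i)
  have hcol : ∀ j k l, ∃! i, P i j = P k l := fun j k l =>
    existsUnique_index_eq (fun i => hidem i j) (fun i => hrank i j) (hcols j) (hidem k l) (hrank k l)
      fun i => hcomm k l i j
  choose σ hσ hσu using fun i j => hrow 0 i j
  have hiff : ∀ i j k, σ i j = k ↔ P i j = P 0 k := fun i j k =>
    ⟨fun h => by rw [← h]; exact (hσ i j).symm, fun h => (hσu i j k h.symm).symm⟩
  refine ⟨P 0, σ, hidem 0, hsa 0, hrank 0, fun k l hkl => ?_, hrows 0, ⟨fun i => ?_, fun j => ?_⟩,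
    fun i j => (hσ i j).symm⟩
  · exact (mul_eq_zero_or_eq (hidem 0 k) (hidem 0 l) (hrank 0 k) (hrank 0 l)
      (hcomm 0 k 0 l)).resolve_right fun h => hkl ((hrow 0 0 l).unique h rfl)
  · rw [Function.bijective_iff_existsUnique]
    intro k
    simpa only [hiff] using hrow i 0 k
  · rw [Function.bijective_iff_existsUnique]
    intro k
    simpa only [hiff] using hcol j 0 k
end

section
/- Let n ≥ 1 be odd and let q ∈ ℂ satisfy q^n = 1. Define α, σ ∈ M_4(ℂ) by α = [[0,1,0,0],[1,0,0,0],[0,0,0,1],[0,0,1,0]] and σ = [[0,0,q,0],[0,0,0,q^{−1}],[q,0,0,0],[0,q^{−1},0,0]]. Then α² = I, (ασ)² = I, σ^{2n} = I, and for every k ∈ ℤ and every sign ε ∈ {+1,−1}, writing x = (1, ε q^k, (−1)^k, ε(−q)^k) ∈ ℂ^4 and G ∈ M_4(ℂ) for the matrix with entries G_{st} = x_s·conj(x_t), one has G = (I + (−1)^k σ^n)(I + ε(−1)^k ασ^k). In particular G equals 4 times the orthogonal projection onto the line ℂ·x, and it is a product of two commuting self-adjoint idempotents scaled by 2 each. 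-/
/-! Up to reordering `ℂ^4 = ℂ^2 ⊗ ℂ^2`, one has `σ = diag(q, q⁻¹) ⊗ P` and `α = P ⊗ I` with `P` the
swap. Hence `σ^k = diag(q^k, q^{-k}) ⊗ P^k`, where `P^k` depends only on the sign `s = (-1)^k`. The
matrix `sigmaShape s u` is this power with `u = q^k` (`sigma_zpow`), and
`(s, u) ↦ sigmaShape s u` is multiplicative. Since `n` is odd and `q^n = 1`,
`σ^n = sigmaShape (-1) 1`, an involution commuting with `α` and `σ`; conjugation by `α` inverts `u`
(`swap_mul_sigmaShape`), so each `ασ^k` is an involution. Since `|q| = 1`, the matrices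
`σ^n` and `ασ^k` are moreover self-adjoint, and `1 + T` satisfies `(1 + T)^2 = 2(1 + T)` for
every involution `T`. The formula for `G` is then compared entry by entry for each choice of the
signs `s`, `ε`. -/

open Complex Matrix BigOperators

/-- The matrix `diag(u, u⁻¹) ⊗ P^k` in block form, where `P` is the swap and `s = (-1)^k`: the scalar
`(1 + s) / 2` is the indicator of even `k` and `(1 - s) / 2` that of odd `k`. -/
noncomputable def sigmaShape (s u : ℂ) : Matrix (Fin 4) (Fin 4) ℂ :=
  !![(1 + s) / 2 * u, 0, (1 - s) / 2 * u, 0;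
     0, (1 + s) / 2 * u⁻¹, 0, (1 - s) / 2 * u⁻¹;
     (1 - s) / 2 * u, 0, (1 + s) / 2 * u, 0;
     0, (1 - s) / 2 * u⁻¹, 0, (1 + s) / 2 * u⁻¹]

lemma sigmaShape_one_one : sigmaShape 1 1 = 1 := by
  ext i j
  fin_cases i <;> fin_cases j <;> simp [sigmaShape]

lemma sigmaShape_mul (s t u v : ℂ) :
    sigmaShape s u * sigmaShape t v = sigmaShape (s * t) (u * v) := by
  ext i j
  fin_cases i <;> fin_cases j <;>
    simp [sigmaShape, Matrix.mul_apply, Fin.sum_univ_four] <;> ring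

lemma sigmaShape_pow (s u : ℂ) (m : ℕ) : sigmaShape s u ^ m = sigmaShape (s ^ m) (u ^ m) := by
  induction m with
  | zero => simp [sigmaShape_one_one]
  | succ m ih => rw [pow_succ, ih, sigmaShape_mul, pow_succ, pow_succ]

lemma sigmaShape_inv {s u : ℂ} (hs : s ≠ 0) (hu : u ≠ 0) :
    (sigmaShape s u)⁻¹ = sigmaShape s⁻¹ u⁻¹ := by
  apply Matrix.inv_eq_right_inv
  rw [sigmaShape_mul, mul_inv_cancel₀ hs, mul_inv_cancel₀ hu, sigmaShape_one_one]

lemma sigma_zpow {q : ℂ} (hq : q ≠ 0) (k : ℤ) :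
    sigmaShape (-1) q ^ k = sigmaShape ((-1) ^ k) (q ^ k) := by
  obtain ⟨m, rfl | rfl⟩ := k.eq_nat_or_neg
  · simp only [zpow_natCast, sigmaShape_pow]
  · rw [Matrix.zpow_neg_natCast, sigmaShape_pow,
      sigmaShape_inv (pow_ne_zero _ (by norm_num)) (pow_ne_zero _ hq)]
    simp only [_root_.zpow_neg, zpow_natCast]

/-- The matrix `α`, exchanging the two basis vectors within each block. -/
def swapMatrix : Matrix (Fin 4) (Fin 4) ℂ :=
  !![0, 1, 0, 0; 1, 0, 0, 0; 0, 0, 0, 1; 0, 0, 1, 0]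

lemma swap_mul_self : swapMatrix * swapMatrix = 1 := by
  ext i j
  fin_cases i <;> fin_cases j <;> simp [swapMatrix, Matrix.mul_apply, Fin.sum_univ_four]

lemma swap_conjTranspose : swapMatrixᴴ = swapMatrix := by
  ext i j
  fin_cases i <;> fin_cases j <;> simp [swapMatrix]

lemma swap_mul_sigmaShape (s u : ℂ) :
    swapMatrix * sigmaShape s u = sigmaShape s u⁻¹ * swapMatrix := by
  ext i j
  fin_cases i <;> fin_cases j <;>
    simp [swapMatrix, sigmaShape, Matrix.mul_apply, Fin.sum_univ_four]

lemma sigmaShape_conjTranspose {s u : ℂ} (hs : starRingEnd ℂ s = s)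
    (hu : starRingEnd ℂ u = u⁻¹) : (sigmaShape s u)ᴴ = sigmaShape s u⁻¹ := by
  ext i j
  fin_cases i <;> fin_cases j <;> simp [sigmaShape, hs, hu]

/-- The reflections `ασ^k` of the dihedral group generated by `α` and `σ` are involutions, because
conjugation by `α` sends `sigmaShape s u` to `sigmaShape s u⁻¹`, its inverse when `s^2 = 1`. -/
lemma reflection_mul_self {s u : ℂ} (hs : s * s = 1) (hu : u ≠ 0) :
    (swapMatrix * sigmaShape s u) * (swapMatrix * sigmaShape s u) = 1 := by
  nth_rewrite 1 [swap_mul_sigmaShape]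
  rw [mul_assoc, ← mul_assoc swapMatrix, swap_mul_self, one_mul, sigmaShape_mul, hs,
    inv_mul_cancel₀ hu, sigmaShape_one_one]

lemma reflection_conjTranspose {s u : ℂ} (hs : starRingEnd ℂ s = s)
    (hu : starRingEnd ℂ u = u⁻¹) :
    (swapMatrix * sigmaShape s u)ᴴ = swapMatrix * sigmaShape s u := by
  rw [Matrix.conjTranspose_mul, sigmaShape_conjTranspose hs hu, swap_conjTranspose,
    swap_mul_sigmaShape]

lemma central_commute_reflection (s u : ℂ) :
    Commute (sigmaShape (-1) 1) (swapMatrix * sigmaShape s u) := by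
  apply Commute.mul_right
  · rw [commute_iff_eq, swap_mul_sigmaShape, inv_one]
  · rw [commute_iff_eq, sigmaShape_mul, sigmaShape_mul, mul_comm s, mul_comm u]

/-- If `T` is an involution and `c = ±1`, then `(1 + cT) / 2` is an idempotent. -/
lemma one_add_smul_mul_self {T : Matrix (Fin 4) (Fin 4) ℂ} {c : ℂ} (hT : T * T = 1)
    (hc : c * c = 1) : (1 + c • T) * (1 + c • T) = (2 : ℂ) • (1 + c • T) := by
  have h : (c • T) * (c • T) = 1 := by rw [smul_mul_smul_comm, hT, hc, one_smul]
  rw [mul_add, add_mul, add_mul, h, two_smul]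
  simp only [one_mul, mul_one]
  abel

lemma one_add_smul_conjTranspose {T : Matrix (Fin 4) (Fin 4) ℂ} {c : ℂ} (hT : Tᴴ = T)
    (hc : starRingEnd ℂ c = c) : (1 + c • T)ᴴ = 1 + c • T := by
  rw [Matrix.conjTranspose_add, Matrix.conjTranspose_one, Matrix.conjTranspose_smul, hT,
    ← starRingEnd_apply, hc]

/-- The identity `G = (1 + (-1)^k σ^n)(1 + ε(-1)^k ασ^k)` entrywise, with `s = (-1)^k`, `u = q^k`. -/
lemma gram_eq {s ε u : ℂ} (hs : s = 1 ∨ s = -1) (hε : ε = 1 ∨ ε = -1) (hu : u ≠ 0)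
    (hconj : starRingEnd ℂ u = u⁻¹) (i j : Fin 4) :
    ![1, ε * u, s, ε * (s * u)] i * starRingEnd ℂ (![1, ε * u, s, ε * (s * u)] j) =
      ((1 + s • sigmaShape (-1) 1) * (1 + (ε * s) • (swapMatrix * sigmaShape s u))) i j := by
  have h1 : (1 : Matrix (Fin 4) (Fin 4) ℂ) + s • sigmaShape (-1) 1 =
      !![1, 0, s, 0; 0, 1, 0, s; s, 0, 1, 0; 0, s, 0, 1] := by
    ext i j
    fin_cases i <;> fin_cases j <;> norm_num [sigmaShape]
  have h2 : swapMatrix * sigmaShape s u =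
      !![0, (1 + s) / 2 * u⁻¹, 0, (1 - s) / 2 * u⁻¹;
         (1 + s) / 2 * u, 0, (1 - s) / 2 * u, 0;
         0, (1 - s) / 2 * u⁻¹, 0, (1 + s) / 2 * u⁻¹;
         (1 - s) / 2 * u, 0, (1 + s) / 2 * u, 0] := by
    ext i j
    fin_cases i <;> fin_cases j <;>
      simp [swapMatrix, sigmaShape, Matrix.mul_apply, Fin.sum_univ_four]
  rw [h1, h2]
  rcases hs with rfl | rfl <;> rcases hε with rfl | rfl <;>
    fin_cases i <;> fin_cases j <;>
    simp [Matrix.mul_apply, Fin.sum_univ_four, Matrix.one_apply, hconj, hu]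

/-- let `n ≥ 1` be odd and `qⁿ = 1`. With
`α = [[0,1,0,0],[1,0,0,0],[0,0,0,1],[0,0,1,0]]` and
`σ = [[0,0,q,0],[0,0,0,q⁻¹],[q,0,0,0],[0,q⁻¹,0,0]]`, one has `α² = I`,
`(ασ)² = I`, `σ^{2n} = I`, and for every `k ∈ ℤ` and sign `ε ∈ {±1}`, writing
`x = (1, εqᵏ, (−1)ᵏ, ε(−q)ᵏ)` and `G_{st} = x_s·conj(x_t)`, one has
`‖x‖² = 4` and `G = (I + (−1)ᵏσⁿ)(I + ε(−1)ᵏασᵏ)`, where the two factors are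
commuting self-adjoint idempotents scaled by 2 each (so `G` is 4 times the
orthogonal projection onto `ℂ·x`). -/
theorem stmt_18 (n : ℕ) (hn : 1 ≤ n) (hodd : Odd n) (q : ℂ) (hq : q ^ n = 1)
    (α σ : Matrix (Fin 4) (Fin 4) ℂ)
    (hα : α = !![0, 1, 0, 0; 1, 0, 0, 0; 0, 0, 0, 1; 0, 0, 1, 0])
    (hσ : σ = !![0, 0, q, 0; 0, 0, 0, q⁻¹; q, 0, 0, 0; 0, q⁻¹, 0, 0]) :
    α ^ 2 = 1 ∧ (α * σ) ^ 2 = 1 ∧ σ ^ (2 * n) = 1 ∧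
    ∀ (k : ℤ) (ε : ℂ), (ε = 1 ∨ ε = -1) →
      ∀ x : Fin 4 → ℂ, x = ![1, ε * q ^ k, (-1 : ℂ) ^ k, ε * (-q) ^ k] →
      ∀ G : Matrix (Fin 4) (Fin 4) ℂ, (∀ s t, G s t = x s * starRingEnd ℂ (x t)) →
        (∑ l, x l * starRingEnd ℂ (x l)) = 4 ∧
        G = (1 + (-1 : ℂ) ^ k • σ ^ n) * (1 + (ε * (-1 : ℂ) ^ k) • (α * σ ^ k)) ∧
        Commute (1 + (-1 : ℂ) ^ k • σ ^ n) (1 + (ε * (-1 : ℂ) ^ k) • (α * σ ^ k)) ∧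
        (1 + (-1 : ℂ) ^ k • σ ^ n)ᴴ = 1 + (-1 : ℂ) ^ k • σ ^ n ∧
        (1 + (ε * (-1 : ℂ) ^ k) • (α * σ ^ k))ᴴ = 1 + (ε * (-1 : ℂ) ^ k) • (α * σ ^ k) ∧
        (1 + (-1 : ℂ) ^ k • σ ^ n) * (1 + (-1 : ℂ) ^ k • σ ^ n)
          = (2 : ℂ) • (1 + (-1 : ℂ) ^ k • σ ^ n) ∧
        (1 + (ε * (-1 : ℂ) ^ k) • (α * σ ^ k)) * (1 + (ε * (-1 : ℂ) ^ k) • (α * σ ^ k))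
          = (2 : ℂ) • (1 + (ε * (-1 : ℂ) ^ k) • (α * σ ^ k)) := by
  have hn0 : n ≠ 0 := by omega
  have hq0 : q ≠ 0 := by
    rintro rfl
    simp [hn0] at hq
  have hσ' : σ = sigmaShape (-1) q := by
    rw [hσ]
    norm_num [sigmaShape]
  have hσn : σ ^ n = sigmaShape (-1) 1 := by
    rw [hσ', sigmaShape_pow, hodd.neg_one_pow, hq]
  replace hα : α = swapMatrix := hα
  have hcentral : sigmaShape (-1) 1 * sigmaShape (-1) 1 = 1 := by
    rw [sigmaShape_mul]
    norm_num [sigmaShape_one_one]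
  refine ⟨?_, ?_, ?_, ?_⟩
  · rw [hα, sq, swap_mul_self]
  · rw [hα, hσ', sq, reflection_mul_self (by norm_num) hq0]
  · rw [mul_comm, pow_mul, hσn, sq, hcentral]
  intro k ε hε x hx G hG
  have hconj : starRingEnd ℂ (q ^ k) = (q ^ k)⁻¹ := by
    rw [Complex.inv_eq_conj]
    rw [norm_zpow, Complex.norm_eq_one_of_pow_eq_one hq hn0, _root_.one_zpow]
  have hu : q ^ k ≠ 0 := zpow_ne_zero k hq0
  have hs : (-1 : ℂ) ^ k = 1 ∨ (-1 : ℂ) ^ k = -1 := by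
    rcases k.even_or_odd with h | h
    · exact Or.inl h.neg_one_zpow
    · exact Or.inr h.neg_one_zpow
  have hnegq : (-q) ^ k = (-1) ^ k * q ^ k := by
    rw [← mul_zpow, neg_one_mul]
  rw [hnegq] at hx
  rw [hσn, hσ', sigma_zpow hq0, hα]
  subst hx
  generalize (-1 : ℂ) ^ k = s at *
  generalize q ^ k = u at *
  -- Only the signs and the relation `conj u = u⁻¹` matter from here on.
  have hss : s * s = 1 := by rcases hs with rfl | rfl <;> norm_num
  have hεs : ε * s * (ε * s) = 1 := by
    rcases hs with rfl | rfl <;> rcases hε with rfl | rfl <;> norm_num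
  have hsconj : starRingEnd ℂ s = s := by rcases hs with rfl | rfl <;> simp
  have hεconj : starRingEnd ℂ (ε * s) = ε * s := by
    rcases hs with rfl | rfl <;> rcases hε with rfl | rfl <;> simp
  refine ⟨?_, ?_, ?_, ?_, ?_, ?_, ?_⟩
  · rcases hs with rfl | rfl <;> rcases hε with rfl | rfl <;>
      simp [Fin.sum_univ_four, hconj, hu] <;> norm_num
  · ext i j
    rw [hG, gram_eq hs hε hu hconj]
  · exact (Commute.one_left _).add_left ((Commute.one_right _).add_right
      (((central_commute_reflection s u).smul_left s).smul_right (ε * s)))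
  · refine one_add_smul_conjTranspose ?_ hsconj
    rw [sigmaShape_conjTranspose (by simp) (by simp), inv_one]
  · exact one_add_smul_conjTranspose (reflection_conjTranspose hsconj hconj) hεconj
  · exact one_add_smul_mul_self hcentral hss
  · exact one_add_smul_mul_self (reflection_mul_self hss hu) hεs
end
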